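/- Let R be the set of positive rational numbers. The Polish group Iso(X_R), the isometry group of the Polish ultrametric Urysohn space X_R, has ample generics and has countable cofinality: it is the union of a countably infinite, strictly increasing sequence of proper subgroups. -/

import Mathlib

/-!
The space `X_R` is homogeneous for finite partial isometries: two points are exchanged by an
isometry which acts on each coordinate by a transposition (`swapFun`), or locally, inside a ball
(`exists_local_swap`), and composing such exchanges extends any partial isometry of a finite set
(`exists_extension`). These exchanges preserve suitable finite sets, namely the sequences with
bounded values and support in a fixed finite set of coordinates, so finitely many partial
isometries of a finite set extend to isometries having a common finite invariant set
(`exists_finite_invariant`). The space is also universal for finite ultrametric spaces with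
distances in `R` (`exists_realization`).

Two finite invariant sets of two tuples of isometries which agree up to `ε` on a common finite
set `Z`, itself invariant up to `ε`, can be amalgamated: the distance from a point `a` of the first
to a point `b` of the second is the maximum of `t` and of the minimum over `z ∈ Z` of
`max (d a z) (d z b)`. Here `t < ε` is a positive rational bounding the relevant small distances;
its existence is where density of `R` enters (`exists_amalgam`).

Consequently a comeager set of tuples is both `Absorbing` (every finite set lies in finite almost
invariant sets, for every precision) and `Rich` (every finite extension of the behaviour on an
almost invariant set is realized approximately). Any two such tuples are conjugate, by a
back-and-forth construction of isometries which converge pointwise, thanks to completeness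
(`exists_conj`).

For countable cofinality, fix a point `x`. By the ultrametric inequality the isometries with
`d (g x) x ≤ k` form a subgroup. These subgroups exhaust the isometry group, and they increase
strictly because the transposition in coordinate `k + 1` moves the zero sequence by exactly `k + 1`.
-/

open Metric Set Topology

namespace UltraGen

variable {X : Type*} [MetricSpace X]

/-- `B` is a ball of radius `r` (i.e. `B = ball x r` for some center, with `r > 0`). -/
def IsBallRad (B : Set X) (r : ℝ) : Prop := 0 < r ∧ ∃ x : X, B = Metric.ball x r

/-- `B` is a ball in `X`. -/
def IsBall (B : Set X) : Prop := ∃ r, IsBallRad B r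

/-- An FD family: a finite family of pairwise disjoint balls. -/
def FDFamily (𝓑 : Set (Set X)) : Prop :=
  𝓑.Finite ∧ (∀ B ∈ 𝓑, IsBall B) ∧ 𝓑.Pairwise fun B B' => Disjoint B B'

/-- τ(g,𝓑) = {g' ∈ Iso(X) : g'[B] = g[B] for all B ∈ 𝓑}. -/
def tau (g : X ≃ᵢ X) (𝓑 : Set (Set X)) : Set (X ≃ᵢ X) :=
  {g' | ∀ B ∈ 𝓑, g' '' B = g '' B}

/-- 𝓑' strengthens 𝓑 iff τ(Id,𝓑') ⊆ τ(Id,𝓑). -/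
def Strengthens (𝓑' 𝓑 : Set (Set X)) : Prop :=
  tau (1 : X ≃ᵢ X) 𝓑' ⊆ tau (1 : X ≃ᵢ X) 𝓑

/-- 𝒪^𝓑(C) = {g[C] : g ∈ τ(Id,𝓑)}. -/
def orb (𝓑 : Set (Set X)) (C : Set X) : Set (Set X) :=
  (fun g : X ≃ᵢ X => g '' C) '' tau (1 : X ≃ᵢ X) 𝓑

/-- A ball `C` is 𝓑-extremal in `X` if 𝒪^𝓑(C) is infinite or a singleton. -/
def Extremal (𝓑 : Set (Set X)) (C : Set X) : Prop :=
  (orb 𝓑 C).Infinite ∨ ∃ D, orb 𝓑 C = {D}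

/-- `X` has the 𝓑-extremality property if every ball in `X` is 𝓑-extremal in `X`. -/
def ExtremalityProperty (X : Type*) [MetricSpace X] (𝓑 : Set (Set X)) : Prop :=
  ∀ C : Set X, IsBall C → Extremal 𝓑 C

/-- `C` is a ball of radius `r` which is r-maximal 𝓑-non-extremal in `X`:
`C` is 𝓑-non-extremal and every ball of radius `r' > r` containing `C` is 𝓑-extremal. -/
def RMaxNonExtremalRad (𝓑 : Set (Set X)) (C : Set X) (r : ℝ) : Prop :=
  IsBallRad C r ∧ ¬ Extremal 𝓑 C ∧
  ∀ (C' : Set X) (r' : ℝ), r < r' → IsBallRad C' r' → C ⊆ C' → Extremal 𝓑 C'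

/-- `C` is r-maximal 𝓑-non-extremal in `X` (for some radius of `C`). -/
def RMaxNonExtremal (𝓑 : Set (Set X)) (C : Set X) : Prop :=
  ∃ r, RMaxNonExtremalRad 𝓑 C r

/-- Distance between two subsets of `X`. -/
noncomputable def setDist (A B : Set X) : ℝ :=
  sInf ((fun p : X × X => dist p.1 p.2) '' A ×ˢ B)

/-- Two subsets are similar if some isometry of `X` maps one onto the other. -/
def Similar (A B : Set X) : Prop := ∃ g : X ≃ᵢ X, g '' A = B

/-- `[B]` for a ball `B` of radius `r`: `B` together with all balls `B'` of radius `r`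
similar to `B` with `dist(B,B') = r`. -/
def ballClass (B : Set X) (r : ℝ) : Set (Set X) :=
  insert B {B' | (∃ x : X, B' = Metric.ball x r) ∧ Similar B B' ∧ setDist B B' = r}

/-- `g` permutes a finite set `Z`. -/
def PermutesSet (g : X ≃ᵢ X) (Z : Set X) : Prop := g '' Z = Z

/-- `g` permutes an FD family 𝓑. -/
def PermutesFam (g : X ≃ᵢ X) (𝓑 : Set (Set X)) : Prop :=
  (fun B => g '' B) '' 𝓑 = 𝓑

/-- The topology of pointwise convergence on the isometry group of `X`. -/
instance isoTopology (X : Type*) [PseudoEMetricSpace X] : TopologicalSpace (X ≃ᵢ X) :=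
  TopologicalSpace.induced (fun g => (g : X → X)) Pi.topologicalSpace

/-- A topological group has ample generics if each diagonal conjugation action
on `G^(n+1)` has a comeager orbit. -/
def HasAmpleGenerics (G : Type*) [Group G] [TopologicalSpace G] : Prop :=
  ∀ n : ℕ, ∃ v : Fin (n + 1) → G,
    {w : Fin (n + 1) → G | ∃ g : G, ∀ i, w i = g * v i * g⁻¹} ∈ residual (Fin (n + 1) → G)

end UltraGen

namespace UltraGen

/-- Carrier of the Polish ultrametric Urysohn space `X_R`:
sequences `x ∈ ℕ^R` such that for every `r > 0` the set `{r' ∈ R : r' > r, x r' ≠ 0}`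
is finite. -/
def UrysohnCarrier (R : Set ℝ) : Type :=
  {x : R → ℕ // ∀ r : ℝ, 0 < r → {p : R | r < (p : ℝ) ∧ x p ≠ 0}.Finite}

/-- The Urysohn ultrametric: `d(x,y) = max {r ∈ R : x r ≠ y r}` (for `x ≠ y`). -/
noncomputable def urysohnDist {R : Set ℝ} (x y : UrysohnCarrier R) : ℝ :=
  sSup {r : ℝ | ∃ h : r ∈ R, x.1 ⟨r, h⟩ ≠ y.1 ⟨r, h⟩}

/-- Carrier of the Polish ultrametric `n`-Urysohn space `X^n_R`: the subspace of `X_R`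
of sequences taking values in `{0, …, n-1}`. -/
def UrysohnCarrierN (R : Set ℝ) (n : ℕ) : Type :=
  {x : R → ℕ // (∀ p : R, x p < n) ∧ ∀ r : ℝ, 0 < r → {p : R | r < (p : ℝ) ∧ x p ≠ 0}.Finite}

/-- The Urysohn ultrametric on `X^n_R`. -/
noncomputable def urysohnDistN {R : Set ℝ} {n : ℕ} (x y : UrysohnCarrierN R n) : ℝ :=
  sSup {r : ℝ | ∃ h : r ∈ R, x.1 ⟨r, h⟩ ≠ y.1 ⟨r, h⟩}

/-- The set of positive rationals, as a subset of `ℝ`. -/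
def QPos : Set ℝ := {r : ℝ | ∃ q : ℚ, 0 < q ∧ (q : ℝ) = r}

/-- The set of positive integers, as a subset of `ℝ`. -/
def NPos : Set ℝ := {r : ℝ | ∃ m : ℕ, 0 < m ∧ (m : ℝ) = r}

end UltraGen

namespace UltraGen

/-! ### Swapping two balls of an ultrametric space -/

section Ultra

variable {S : Type*} [MetricSpace S] [IsUltrametricDist S]

/-- If an isometric involution `τ` sends `b` to `b'`, the map which is `τ` on the two open balls of
radius `dist b b'` around `b` and `b'`, and the identity elsewhere, is an isometry. -/
lemma exists_local_swap (τ : S → S) (hinv : ∀ x, τ (τ x) = x)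
    (hiso : ∀ x y, dist (τ x) (τ y) = dist x y) (b b' : S) (hb : τ b = b') :
    ∃ k : S ≃ᵢ S, k b = b' ∧ (∀ x, k x = x ∨ k x = τ x) ∧
      ∀ x, dist b b' ≤ dist x b → dist b b' ≤ dist x b' → k x = x := by
  classical
  by_cases hbb : b = b'
  · exact ⟨1, hbb, fun x => Or.inl rfl, fun x _ _ => rfl⟩
  have hb' : τ b' = b := by rw [← hb, hinv]
  have hr : 0 < dist b b' := dist_pos.2 hbb
  let U : Set S := {x | dist x b < dist b b' ∨ dist x b' < dist b b'}
  have hU : ∀ x, x ∈ U → τ x ∈ U := by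
    rintro x (h | h)
    · right; rwa [← hb, hiso, hb]
    · left
      calc dist (τ x) b = dist (τ x) (τ b') := by rw [hb']
        _ < _ := by rwa [hiso]
  have hU' : ∀ x, τ x ∈ U ↔ x ∈ U := fun x =>
    ⟨fun h => by simpa [hinv] using hU _ h, hU x⟩
  -- a point of `U` is moved by at most `dist b b'`
  have hmove : ∀ x ∈ U, dist (τ x) x ≤ dist b b' := by
    rintro x (h | h)
    · have h1 : dist (τ x) b' < dist b b' := by rwa [← hb, hiso, hb]
      have h2 := dist_triangle_max (τ x) b' x
      have h3 := dist_triangle_max b' b x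
      rw [dist_comm b' b, dist_comm b x] at h3
      exact h2.trans (max_le h1.le (h3.trans (max_le le_rfl h.le)))
    · have h1 : dist (τ x) b < dist b b' := by
        calc dist (τ x) b = dist (τ x) (τ b') := by rw [hb']
          _ < _ := by rwa [hiso]
      have h2 := dist_triangle_max (τ x) b x
      have h3 := dist_triangle_max b b' x
      rw [dist_comm b' x] at h3
      exact h2.trans (max_le h1.le (h3.trans (max_le le_rfl h.le)))
  have hfar : ∀ x ∈ U, ∀ y, y ∉ U → dist b b' ≤ dist x y := by
    rintro x (h | h) y hy
    · by_contra hlt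
      push Not at hlt
      refine hy (Or.inl ?_)
      exact (dist_triangle_max y x b).trans_lt (max_lt (by rwa [dist_comm]) h)
    · by_contra hlt
      push Not at hlt
      refine hy (Or.inr ?_)
      exact (dist_triangle_max y x b').trans_lt (max_lt (by rwa [dist_comm]) h)
  have hmix : ∀ x ∈ U, ∀ y, y ∉ U → dist (τ x) y = dist x y := by
    intro x hx y hy
    apply le_antisymm
    · exact (dist_triangle_max _ x _).trans
        (max_le ((hmove x hx).trans (hfar x hx y hy)) le_rfl)
    · refine (dist_triangle_max _ (τ x) _).trans (max_le ?_ le_rfl)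
      rw [dist_comm]
      exact (hmove x hx).trans (hfar _ (hU x hx) y hy)
  let k : S → S := fun x => if x ∈ U then τ x else x
  have hk1 : ∀ x ∈ U, k x = τ x := fun x hx => if_pos hx
  have hk2 : ∀ x, x ∉ U → k x = x := fun x hx => if_neg hx
  have hkinv : Function.Involutive k := by
    intro x
    by_cases hx : x ∈ U
    · rw [hk1 x hx, hk1 _ (hU x hx), hinv]
    · rw [hk2 x hx, hk2 x hx]
  have hkiso : Isometry k := by
    refine Isometry.of_dist_eq fun x y => ?_
    by_cases hx : x ∈ U <;> by_cases hy : y ∈ U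
    · rw [hk1 x hx, hk1 y hy, hiso]
    · rw [hk1 x hx, hk2 y hy, hmix x hx y hy]
    · rw [hk2 x hx, hk1 y hy, dist_comm, hmix y hy x hx, dist_comm]
    · rw [hk2 x hx, hk2 y hy]
  refine ⟨⟨hkinv.toPerm, hkiso⟩, ?_, ?_, ?_⟩
  · exact (hk1 b (Or.inl (by simpa using hr))).trans hb
  · intro x
    by_cases hx : x ∈ U
    · exact Or.inr (hk1 x hx)
    · exact Or.inl (hk2 x hx)
  · intro x h1 h2
    exact hk2 x (by rintro (h | h) <;> linarith)

end Ultra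

/-! ### The metric of the rational Urysohn space -/

section Concrete

/-- The rational ultrametric Urysohn space. -/
abbrev QS : Type := UrysohnCarrier QPos

lemma QPos.pos {r : ℝ} (h : r ∈ QPos) : 0 < r := by
  obtain ⟨q, hq, rfl⟩ := h
  exact_mod_cast hq

lemma exists_top_diff (x y : QS) (h : x ≠ y) :
    ∃ q : QPos, x.1 q ≠ y.1 q ∧ ∀ p : QPos, q < p → x.1 p = y.1 p := by
  have : ∃ p, x.1 p ≠ y.1 p := by
    by_contra! hc
    exact h (Subtype.ext (funext hc))
  obtain ⟨p0, hp0⟩ := this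
  have hpos := QPos.pos p0.2
  have hfin : {p : QPos | (p0 : ℝ) / 2 < p ∧ x.1 p ≠ y.1 p}.Finite := by
    refine ((x.2 (p0 / 2) (by positivity)).union (y.2 (p0 / 2) (by positivity))).subset ?_
    rintro p ⟨h1, h2⟩
    by_cases hx : x.1 p = 0
    · exact Or.inr ⟨h1, fun hy => h2 (hx.trans hy.symm)⟩
    · exact Or.inl ⟨h1, hx⟩
  have hne : hfin.toFinset.Nonempty := ⟨p0, by simpa using ⟨hpos, hp0⟩⟩
  obtain ⟨q, hq, hmax⟩ := hfin.toFinset.exists_max_image id hne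
  simp only [Finite.mem_toFinset, mem_ofPred_eq, id] at hq hmax
  refine ⟨q, hq.2, fun p hp => ?_⟩
  by_contra hc
  exact absurd (hmax p ⟨hq.1.trans hp, hc⟩) (not_le.2 hp)

instance : Countable QPos :=
  (Set.countable_range (fun q : ℚ => (q : ℝ))).mono (by rintro r ⟨q, -, rfl⟩; exact ⟨q, rfl⟩)

/-- The point of the Urysohn space with given finitely supported coordinates. -/
def ofFinsupp (f : QPos →₀ ℕ) : QS :=
  ⟨f, fun _ _ => f.hasFiniteSupport.subset fun _ h => h.2⟩

instance : Nonempty QS := ⟨ofFinsupp 0⟩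

/-- Coordinatewise transposition exchanging `b` and `b'`. -/
def swapFun (b b' x : QS) : QS :=
  ⟨fun q => Equiv.swap (b.1 q) (b'.1 q) (x.1 q), fun r hr => by
    refine ((x.2 r hr).union ((b.2 r hr).union (b'.2 r hr))).subset ?_
    rintro q ⟨h1, h2⟩
    by_contra hc
    simp only [Set.mem_union, Set.mem_ofPred_eq, not_or, not_and, not_not] at hc
    refine h2 ?_
    change Equiv.swap (b.1 q) (b'.1 q) (x.1 q) = 0
    rw [hc.1 h1, hc.2.1 h1, hc.2.2 h1]
    simp⟩

lemma swapFun_swapFun (b b' x : QS) : swapFun b b' (swapFun b b' x) = x :=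
  Subtype.ext (funext fun _ => Equiv.swap_apply_self _ _ _)

lemma swapFun_left (b b' : QS) : swapFun b b' b = b' :=
  Subtype.ext (funext fun _ => Equiv.swap_apply_left _ _)

/-- The metric structure on the Urysohn space is given by the Urysohn ultrametric. -/
class IsUrysohnMetric [D : MetricSpace QS] : Prop where
  dist_eq : ∀ x y : QS, x ≠ y → D.dist x y = urysohnDist x y

variable [MetricSpace QS] [hU : IsUrysohnMetric]

lemma dist_eq_of_top_diff (x y : QS) (q : QPos) (h1 : x.1 q ≠ y.1 q)
    (h2 : ∀ p : QPos, q < p → x.1 p = y.1 p) : dist x y = q := by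
  have hne : x ≠ y := by rintro rfl; exact h1 rfl
  rw [show dist x y = urysohnDist x y from hU.dist_eq x y hne]
  refine IsGreatest.csSup_eq ⟨⟨q.2, h1⟩, ?_⟩
  rintro r ⟨hr, hne⟩
  by_contra hlt
  exact hne (h2 ⟨r, hr⟩ (not_le.1 hlt))

lemma dist_le_iff (x y : QS) (r : ℝ) (hr : 0 ≤ r) :
    dist x y ≤ r ↔ ∀ q : QPos, r < q → x.1 q = y.1 q := by
  by_cases hne : x = y
  · subst hne; simpa using hr
  obtain ⟨q, h1, h2⟩ := exists_top_diff x y hne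
  rw [dist_eq_of_top_diff x y q h1 h2]
  constructor
  · intro h p hp
    exact h2 p (Subtype.coe_lt_coe.1 (lt_of_le_of_lt h hp))
  · intro h
    by_contra hlt
    exact h1 (h q (not_le.1 hlt))

lemma coord_eq_of_dist_lt {x y : QS} {q : QPos} (h : dist x y < q) : x.1 q = y.1 q :=
  (dist_le_iff x y _ dist_nonneg).1 le_rfl q h

lemma dist_mem_QPos {x y : QS} (h : 0 < dist x y) : dist x y ∈ QPos := by
  obtain ⟨q, h1, h2⟩ := exists_top_diff x y (dist_pos.1 h)
  rw [dist_eq_of_top_diff x y q h1 h2]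
  exact q.2

instance : IsUltrametricDist QS where
  dist_triangle_max x y z := by
    rw [dist_le_iff _ _ _ (le_max_of_le_left dist_nonneg)]
    intro q hq
    exact (coord_eq_of_dist_lt ((le_max_left _ _).trans_lt hq)).trans
      (coord_eq_of_dist_lt ((le_max_right _ _).trans_lt hq))

instance : CompleteSpace QS := by
  refine Metric.complete_of_cauchySeq_tendsto fun u hu => ?_
  rw [Metric.cauchySeq_iff'] at hu
  have h1 : ∀ q : QPos, ∃ N, ∀ n ≥ N, dist (u n) (u N) < q := fun q => hu q (QPos.pos q.2)
  choose N hN using h1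
  -- each coordinate is eventually constant, uniformly above any threshold
  have key : ∀ (r : ℝ) (M : ℕ), (∀ n ≥ M, dist (u n) (u M) < r) → ∀ q : QPos, r ≤ q →
      (u (N q)).1 q = (u M).1 q := by
    intro r M hM q hq
    rw [← coord_eq_of_dist_lt (hN q (max (N q) M) (le_max_left _ _)),
      ← coord_eq_of_dist_lt ((hM (max (N q) M) (le_max_right _ _)).trans_le hq)]
  let x : QS := ⟨fun q => (u (N q)).1 q, fun r hr => by
    obtain ⟨M, hM⟩ := hu r hr
    refine ((u M).2 r hr).subset ?_
    rintro q ⟨h1, h2⟩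
    exact ⟨h1, fun h => h2 ((key r M hM q h1.le).trans h)⟩⟩
  refine ⟨x, ?_⟩
  rw [Metric.tendsto_atTop]
  intro ε hε
  obtain ⟨M, hM⟩ := hu (ε / 2) (by positivity)
  refine ⟨M, fun n hn => lt_of_le_of_lt ?_ (half_lt_self hε)⟩
  rw [dist_le_iff _ _ _ (by positivity)]
  intro q hq
  rw [coord_eq_of_dist_lt ((hM n hn).trans hq)]
  exact (key _ M hM q hq.le).symm

instance : TopologicalSpace.SeparableSpace QS := by
  refine ⟨Set.range ofFinsupp, Set.countable_range _, ?_⟩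
  rw [Metric.dense_iff]
  intro x r hr
  have hfin := x.2 (r / 2) (by positivity)
  let f : QPos →₀ ℕ := Finsupp.onFinset hfin.toFinset
    (fun q => if r / 2 < q then x.1 q else 0) (by
      intro q hq
      simp only [ne_eq, ite_eq_right_iff, Classical.not_imp] at hq
      simpa using hq)
  refine ⟨ofFinsupp f, ?_, f, rfl⟩
  rw [Metric.mem_ball]
  refine lt_of_le_of_lt ?_ (half_lt_self hr)
  rw [dist_le_iff _ _ _ (by positivity)]
  intro q hq
  change (if r / 2 < (q : ℝ) then x.1 q else 0) = x.1 q
  rw [if_pos hq]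

/-! ### Homogeneity and universality of the Urysohn space -/

lemma dist_swapFun (b b' x y : QS) : dist (swapFun b b' x) (swapFun b b' y) = dist x y := by
  refine eq_of_forall_ge_iff fun r => ?_
  by_cases hr : 0 ≤ r
  · rw [dist_le_iff _ _ _ hr, dist_le_iff _ _ _ hr]
    exact forall₂_congr fun q _ => (Equiv.injective _).eq_iff
  · push Not at hr
    constructor <;> intro h <;> linarith [dist_nonneg.trans h]

/-- Ultrahomogeneity: a finite partial isometry extends to an isometry of the whole space. If
domain and range lie in a set `Y` closed under coordinatewise transpositions, the extension can be
chosen to preserve `Y`. -/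
lemma exists_extension (Y : Set QS) (hY : ∀ b ∈ Y, ∀ b' ∈ Y, ∀ x ∈ Y, swapFun b b' x ∈ Y)
    {α : Type*} (s : Finset α) (f f' : α → QS) (hf : ∀ i ∈ s, f i ∈ Y) (hf' : ∀ i ∈ s, f' i ∈ Y)
    (hd : ∀ i ∈ s, ∀ j ∈ s, dist (f i) (f j) = dist (f' i) (f' j)) :
    ∃ g : QS ≃ᵢ QS, (∀ y ∈ Y, g y ∈ Y) ∧ ∀ i ∈ s, g (f i) = f' i := by
  classical
  induction s using Finset.induction_on with
  | empty => exact ⟨1, fun y hy => hy, by simp⟩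
  | insert c s hc ih =>
    simp only [Finset.mem_insert, forall_eq_or_imp] at hf hf' hd
    obtain ⟨g, hgY, hg⟩ := ih hf.2 hf'.2 fun i hi j hj => (hd.2 i hi).2 j hj
    obtain ⟨k, hkb, hk, hfix⟩ := exists_local_swap (swapFun (g (f c)) (f' c))
      (swapFun_swapFun _ _) (dist_swapFun _ _) (g (f c)) (f' c) (swapFun_left _ _)
    refine ⟨k * g, ?_, ?_⟩
    · intro y hy
      rw [IsometryEquiv.mul_apply]
      rcases hk (g y) with h | h <;> rw [h]
      · exact hgY y hy
      · exact hY _ (hgY _ hf.1) _ hf'.1 _ (hgY y hy)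
    · simp only [Finset.mem_insert, forall_eq_or_imp, IsometryEquiv.mul_apply]
      refine ⟨hkb, fun i hi => ?_⟩
      rw [hg i hi]
      -- `f' i` is equidistant from the two points to be exchanged
      have h1 : dist (f' i) (g (f c)) = dist (f' i) (f' c) := by
        rw [← hg i hi, g.dist_eq, (hd.2 i hi).1, hg i hi]
      have h2 : dist (g (f c)) (f' c) ≤ dist (f' i) (f' c) := by
        refine (dist_triangle_max _ (f' i) _).trans (max_le ?_ le_rfl)
        rw [dist_comm, h1]
      exact hfix _ (h2.trans h1.ge) h2

/-- Universality: every finite pseudo-ultrametric with rational values is realised by finitely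
supported points. -/
lemma exists_realization {α : Type*} (s : Finset α) (ρ : α → α → ℝ)
    (hself : ∀ i, ρ i i = 0) (hnonneg : ∀ i j, 0 ≤ ρ i j) (hsymm : ∀ i j, ρ i j = ρ j i)
    (hult : ∀ i j k, ρ i k ≤ max (ρ i j) (ρ j k)) (hrat : ∀ i j, 0 < ρ i j → ρ i j ∈ QPos) :
    ∃ f : α → QS, (∀ i ∈ s, {q | (f i).1 q ≠ 0}.Finite) ∧
      ∀ i ∈ s, ∀ j ∈ s, dist (f i) (f j) = ρ i j := by
  classical
  induction s using Finset.induction_on with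
  | empty => exact ⟨fun _ => ofFinsupp 0, by simp, by simp⟩
  | insert c s hc ih =>
    obtain ⟨f, hfin, hf⟩ := ih
    -- it suffices to place the new point at the right distances from the old ones
    suffices h : ∃ x : QS, {q | x.1 q ≠ 0}.Finite ∧ ∀ j ∈ s, dist x (f j) = ρ c j by
      obtain ⟨x, hx, hxd⟩ := h
      have hne : ∀ j ∈ s, j ≠ c := fun j hj h => hc (h ▸ hj)
      refine ⟨Function.update f c x, ?_, ?_⟩
      · intro i hi
        rcases Finset.mem_insert.1 hi with rfl | hi
        · simpa using hx
        · simpa [Function.update_of_ne (hne i hi)] using hfin i hi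
      · intro i hi j hj
        rcases Finset.mem_insert.1 hi with hi' | hi' <;> rcases Finset.mem_insert.1 hj with hj' | hj'
        · simp [hi', hj', hself]
        · rw [hi', Function.update_self, Function.update_of_ne (hne j hj'), hxd j hj']
        · rw [hj', Function.update_self, Function.update_of_ne (hne i hi'), dist_comm, hxd i hi',
            hsymm]
        · rw [Function.update_of_ne (hne i hi'), Function.update_of_ne (hne j hj'),
            hf i hi' j hj']
    rcases s.eq_empty_or_nonempty with rfl | hs
    · exact ⟨ofFinsupp 0, (0 : QPos →₀ ℕ).hasFiniteSupport, by simp⟩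
    obtain ⟨i, hi, hmin⟩ := s.exists_min_image (ρ c) hs
    rcases (hnonneg c i).eq_or_lt with h0 | hpos
    · refine ⟨f i, hfin i hi, fun j hj => ?_⟩
      rw [hf i hi j hj]
      apply le_antisymm
      · refine (hult i c j).trans (max_le ?_ le_rfl)
        rw [hsymm i c, ← h0]; exact hnonneg _ _
      · refine (hult c i j).trans (max_le ?_ le_rfl)
        rw [← h0]; exact hnonneg _ _
    -- change the nearest point in the coordinate of the required distance, to a fresh value
    let r : QPos := ⟨ρ c i, hrat _ _ hpos⟩
    let N : ℕ := s.sup (fun j => (f j).1 r) + 1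
    have hN : ∀ j ∈ s, (f j).1 r ≠ N := fun j hj =>
      (Nat.lt_succ_of_le (Finset.le_sup (f := fun j => (f j).1 r) hj)).ne
    have hsupp : {q | Function.update (f i).1 r N q ≠ 0}.Finite := by
      refine ((hfin i hi).insert r).subset fun q hq => ?_
      by_cases h : q = r
      · exact Or.inl h
      · right
        have hq' : Function.update (f i).1 r N q ≠ 0 := hq
        rwa [Function.update_of_ne h] at hq'
    let x : QS := ⟨Function.update (f i).1 r N, fun _ _ => hsupp.subset fun _ h => h.2⟩
    have hxr : x.1 r = N := Function.update_self _ _ _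
    have hxq : ∀ q, r < q → x.1 q = (f i).1 q := fun q hq => Function.update_of_ne hq.ne' _ _
    have hxi : dist x (f i) = ρ c i :=
      dist_eq_of_top_diff x (f i) r (by rw [hxr]; exact (hN i hi).symm) hxq
    refine ⟨x, hsupp, fun j hj => ?_⟩
    rcases le_or_gt (ρ i j) (ρ c i) with hle | hgt
    · have h1 : ρ c j = ρ c i :=
        le_antisymm ((hult c i j).trans (max_le le_rfl hle)) (hmin j hj)
      rw [h1]
      refine dist_eq_of_top_diff x (f j) r (by rw [hxr]; exact (hN j hj).symm) fun q hq => ?_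
      rw [hxq q hq]
      exact coord_eq_of_dist_lt (lt_of_le_of_lt ((hf i hi j hj).trans_le hle) hq)
    · have h1 : ρ c j = ρ i j := by
        apply le_antisymm
        · exact (hult c i j).trans (max_le hgt.le le_rfl)
        · have := hult i c j
          rw [hsymm i c] at this
          exact (le_max_iff.1 this).resolve_left (not_le.2 hgt)
      have h2 : dist x (f j) = dist (f i) (f j) := by
        have hgt' : dist x (f i) < dist (f i) (f j) := by rwa [hxi, hf i hi j hj]
        apply le_antisymm
        · exact (dist_triangle_max x (f i) (f j)).trans (max_le hgt'.le le_rfl)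
        · have := dist_triangle_max (f i) x (f j)
          rw [dist_comm (f i) x] at this
          exact (le_max_iff.1 this).resolve_left (not_le.2 hgt')
      rw [h1, h2, hf i hi j hj]

/-- Extension property for partial isometries: finitely many isometries agree on a given finite set
with isometries that preserve a finite superset. -/
lemma exists_finite_invariant {m : ℕ} (v : Fin m → QS ≃ᵢ QS) (Z : Finset QS) :
    ∃ (v' : Fin m → QS ≃ᵢ QS) (Z' : Finset QS), Z ⊆ Z' ∧ (∀ i, ∀ z ∈ Z, v' i z = v i z) ∧
      ∀ i, ∀ z ∈ Z', v' i z ∈ Z' := by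
  classical
  let W : Finset QS := Z ∪ Finset.univ.biUnion fun i => Z.image (v i)
  obtain ⟨f, hfin, hf⟩ := exists_realization W (fun x y : QS => dist x y) dist_self
    (fun _ _ => dist_nonneg) dist_comm dist_triangle_max fun _ _ => dist_mem_QPos
  obtain ⟨g, -, hg⟩ := exists_extension Set.univ (fun _ _ _ _ _ _ => trivial) W id f
    (fun _ _ => trivial) (fun _ _ => trivial) fun i hi j hj => (hf i hi j hj).symm
  have hg' : ∀ w ∈ W, g w = f w := hg
  -- `Y` is a finite homogeneous space containing the image of `W`
  have hP : (⋃ w ∈ W, {q | (f w).1 q ≠ 0}).Finite := W.finite_toSet.biUnion hfin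
  let P := hP.toFinset
  let N : ℕ := (W ×ˢ P).sup (fun t => (f t.1).1 t.2) + 1
  let Y : Set QS := {x | ∀ q, x.1 q < N ∧ (q ∉ P → x.1 q = 0)}
  have hYfin : Y.Finite := by
    refine Set.Finite.of_finite_image (f := fun x : QS => fun p : P => x.1 p)
      ((Set.finite_Iic (fun _ : P => N)).subset ?_) ?_
    · rintro _ ⟨x, hx, rfl⟩ p
      exact (hx p).1.le
    · intro x hx y hy hxy
      refine Subtype.ext (funext fun q => ?_)
      by_cases hq : q ∈ P
      · exact congrFun hxy ⟨q, hq⟩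
      · rw [(hx q).2 hq, (hy q).2 hq]
  have hYswap : ∀ b ∈ Y, ∀ b' ∈ Y, ∀ x ∈ Y, swapFun b b' x ∈ Y := by
    intro b hb b' hb' x hx q
    have key : ∀ p : ℕ → Prop, p (b.1 q) → p (b'.1 q) → p (x.1 q) →
        p ((swapFun b b' x).1 q) := by
      intro p h1 h2 h3
      change p (Equiv.swap (b.1 q) (b'.1 q) (x.1 q))
      rw [Equiv.swap_apply_def]
      split_ifs <;> assumption
    exact key (fun n => n < N ∧ (q ∉ P → n = 0)) (hb q) (hb' q) (hx q)
  have hWY : ∀ w ∈ W, f w ∈ Y := by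
    intro w hw q
    have hP' : q ∉ P → (f w).1 q = 0 := by
      intro hq
      by_contra hne
      refine hq (hP.mem_toFinset.2 ?_)
      simp only [Set.mem_iUnion]
      exact ⟨w, hw, hne⟩
    refine ⟨?_, hP'⟩
    by_cases hq : q ∈ P
    · exact Nat.lt_succ_of_le (Finset.le_sup (f := fun t : QS × QPos => (f t.1).1 t.2)
        (Finset.mk_mem_product hw hq))
    · rw [hP' hq]; exact Nat.succ_pos _
  have hZW : ∀ z ∈ Z, z ∈ W := fun z hz => Finset.mem_union_left _ hz
  have hvW : ∀ i, ∀ z ∈ Z, v i z ∈ W := fun i z hz => Finset.mem_union_right _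
    (Finset.mem_biUnion.2 ⟨i, Finset.mem_univ _, Finset.mem_image_of_mem _ hz⟩)
  have hext : ∀ i, ∃ h : QS ≃ᵢ QS, (∀ y ∈ Y, h y ∈ Y) ∧ ∀ z ∈ Z, h (f z) = f (v i z) := by
    intro i
    refine exists_extension Y hYswap Z f (fun z => f (v i z)) (fun z hz => hWY z (hZW z hz))
      (fun z hz => hWY _ (hvW i z hz)) fun a ha b hb => ?_
    rw [hf _ (hZW a ha) _ (hZW b hb), hf _ (hvW i a ha) _ (hvW i b hb), (v i).dist_eq]
  choose h hhY hh using hext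
  have hmem : ∀ x, x ∈ hYfin.toFinset.image g.symm ↔ g x ∈ Y := by
    intro x
    simp only [Finset.mem_image, Set.Finite.mem_toFinset]
    constructor
    · rintro ⟨y, hy, rfl⟩
      simpa using hy
    · intro hx
      exact ⟨g x, hx, by simp⟩
  refine ⟨fun i => g⁻¹ * h i * g, hYfin.toFinset.image g.symm, ?_, ?_, ?_⟩
  · intro z hz
    rw [hmem, hg' z (hZW z hz)]
    exact hWY z (hZW z hz)
  · intro i z hz
    change g.symm (h i (g z)) = v i z
    rw [hg' z (hZW z hz), hh i z hz, ← hg' _ (hvW i z hz)]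
    simp
  · intro i z hz
    rw [hmem] at hz ⊢
    change g (g.symm (h i (g z))) ∈ Y
    rw [g.apply_symm_apply]
    exact hhY i _ hz

/-- Amalgamation: let `v` and `u` preserve the finite sets `Z₀` and `Z₁`, and agree up to `ε` on a
set `Z` contained in both and invariant up to `ε`. Then a copy of the action of `u` on `Z₁`, moved by
some `h` which is the identity on `Z` up to `ε`, extends simultaneously with the action of `v` on
`Z₀`. -/
lemma exists_amalgam {m : ℕ} (v u : Fin m → QS ≃ᵢ QS) (Z Z₀ Z₁ : Finset QS) (ε : ℝ) (hε : 0 < ε)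
    (hZ : Z.Nonempty) (hZ₀ : Z ⊆ Z₀) (hZ₁ : Z ⊆ Z₁) (hv₀ : ∀ i, ∀ z ∈ Z₀, v i z ∈ Z₀)
    (hu₁ : ∀ i, ∀ z ∈ Z₁, u i z ∈ Z₁) (hinv : ∀ i, ∀ z ∈ Z, ∃ z' ∈ Z, dist (v i z) z' < ε)
    (hclose : ∀ i, ∀ z ∈ Z, dist (u i z) (v i z) < ε) :
    ∃ (h : QS ≃ᵢ QS) (w : Fin m → QS ≃ᵢ QS), (∀ z ∈ Z, dist (h z) z < ε) ∧
      (∀ i, ∀ z ∈ Z₀, w i z = v i z) ∧ ∀ i, ∀ z ∈ Z₁, h (u i z) = w i (h z) := by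
  classical
  -- a positive rational `t < ε` bounding all distances below `ε` that occur
  obtain ⟨t, htQ, htε, ht⟩ : ∃ t : ℝ, t ∈ QPos ∧ t < ε ∧
      ∀ a ∈ Z₀ ∪ Z₁, ∀ b ∈ Z₀ ∪ Z₁, dist a b < ε → dist a b ≤ t := by
    let T : Finset ℝ := insert 0
      ((((Z₀ ∪ Z₁) ×ˢ (Z₀ ∪ Z₁)).image fun p => dist p.1 p.2).filter (· < ε))
    have hT : T.Nonempty := Finset.insert_nonempty _ _
    have hTε : T.max' hT < ε := by
      have := T.max'_mem hT
      rcases Finset.mem_insert.1 this with h | h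
      · rw [h]; exact hε
      · exact (Finset.mem_filter.1 h).2
    have hT0 : 0 ≤ T.max' hT := T.le_max' _ (Finset.mem_insert_self _ _)
    obtain ⟨q, hq1, hq2⟩ := exists_rat_btwn hTε
    refine ⟨q, ⟨q, by exact_mod_cast hT0.trans_lt hq1, rfl⟩, hq2, fun a ha b hb hab => ?_⟩
    refine (T.le_max' _ ?_).trans hq1.le
    exact Finset.mem_insert_of_mem (Finset.mem_filter.2
      ⟨Finset.mem_image.2 ⟨(a, b), Finset.mk_mem_product ha hb, rfl⟩, hab⟩)
  have ht0 : 0 < t := QPos.pos htQ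
  let c : QS → QS → ℝ := fun a b => max t (Z.inf' hZ fun z => max (dist a z) (dist z b))
  have hc_le : ∀ a b, ∀ z ∈ Z, ∀ s, t ≤ s → dist a z ≤ s → dist z b ≤ s → c a b ≤ s :=
    fun a b z hz s h1 h2 h3 => max_le h1 ((Finset.inf'_le _ hz).trans (max_le h2 h3))
  have hc_wit : ∀ a b, ∃ z ∈ Z, dist a z ≤ c a b ∧ dist z b ≤ c a b := by
    intro a b
    obtain ⟨z, hz, h⟩ := Z.exists_mem_eq_inf' hZ fun z => max (dist a z) (dist z b)
    exact ⟨z, hz, (le_max_left _ _).trans (h.ge.trans (le_max_right _ _)),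
      (le_max_right _ _).trans (h.ge.trans (le_max_right _ _))⟩
  have htc : ∀ a b, t ≤ c a b := fun a b => le_max_left _ _
  have hc_rat : ∀ a b, c a b ∈ QPos := by
    intro a b
    obtain ⟨z, hz, h⟩ := Z.exists_mem_eq_inf' hZ fun z => max (dist a z) (dist z b)
    have hdef : c a b = max t (max (dist a z) (dist z b)) := by rw [← h]
    rcases max_choice t (max (dist a z) (dist z b)) with h1 | h1
    · rw [hdef, h1]; exact htQ
    · have hpos : 0 < max (dist a z) (dist z b) := by
        rw [← h1]; exact lt_max_of_lt_left ht0
      rw [hdef, h1]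
      rcases max_choice (dist a z) (dist z b) with h2 | h2 <;> rw [h2] at hpos ⊢ <;>
        exact dist_mem_QPos hpos
  -- the four mixed triangle inequalities
  have hc1 : ∀ a a' b, c a b ≤ max (dist a a') (c a' b) := by
    intro a a' b
    obtain ⟨z, hz, h1, h2⟩ := hc_wit a' b
    refine hc_le a b z hz _ (le_max_of_le_right (htc _ _)) ?_ (le_max_of_le_right h2)
    exact (dist_triangle_max a a' z).trans (max_le_max le_rfl h1)
  have hc2 : ∀ a b b', c a b ≤ max (c a b') (dist b' b) := by
    intro a b b'
    obtain ⟨z, hz, h1, h2⟩ := hc_wit a b'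
    refine hc_le a b z hz _ (le_max_of_le_left (htc _ _)) (le_max_of_le_left h1) ?_
    exact (dist_triangle_max z b' b).trans (max_le_max h2 le_rfl)
  have hc3 : ∀ a a' b, dist a a' ≤ max (c a b) (c a' b) := by
    intro a a' b
    obtain ⟨z, hz, h1, h2⟩ := hc_wit a b
    obtain ⟨z', hz', h3, h4⟩ := hc_wit a' b
    rw [dist_comm] at h3 h4
    have e1 := (dist_triangle_max a z b).trans (max_le h1 h2)
    have e2 := (dist_triangle_max b z' a').trans (max_le h4 h3)
    exact (dist_triangle_max a b a').trans (max_le_max e1 e2)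
  have hc4 : ∀ a b b', dist b b' ≤ max (c a b) (c a b') := by
    intro a b b'
    obtain ⟨z, hz, h1, h2⟩ := hc_wit a b
    obtain ⟨z', hz', h3, h4⟩ := hc_wit a b'
    rw [dist_comm] at h1 h2
    have e1 := (dist_triangle_max b z a).trans (max_le h2 h1)
    have e2 := (dist_triangle_max a z' b').trans (max_le h3 h4)
    exact (dist_triangle_max b a b').trans (max_le_max e1 e2)
  let ρ : QS ⊕ QS → QS ⊕ QS → ℝ
    | .inl a, .inl b => dist a b
    | .inr a, .inr b => dist a b
    | .inl a, .inr b => c a b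
    | .inr b, .inl a => c a b
  -- invariance of the mixed distances
  have hstep : ∀ i, ∀ a ∈ Z₀, ∀ b ∈ Z₁, c (v i a) (u i b) ≤ c a b := by
    intro i a ha b hb
    obtain ⟨z, hz, h1, h2⟩ := hc_wit a b
    obtain ⟨z', hz', hd⟩ := hinv i z hz
    have hd' : dist z' (u i z) < ε := by
      refine (dist_triangle_max z' (v i z) _).trans_lt (max_lt (by rwa [dist_comm]) ?_)
      rw [dist_comm]; exact hclose i z hz
    refine hc_le _ _ z' hz' _ (htc _ _) ?_ ?_
    · by_cases hlt : dist (v i a) z' < ε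
      · exact (ht _ (Finset.mem_union_left _ (hv₀ i a ha)) _
          (Finset.mem_union_left _ (hZ₀ hz')) hlt).trans (htc _ _)
      · have := dist_triangle_max (v i a) (v i z) z'
        rw [(v i).dist_eq] at this
        rcases le_max_iff.1 this with h | h
        · exact h.trans h1
        · exact absurd (h.trans_lt hd) hlt
    · by_cases hlt : dist z' (u i b) < ε
      · exact (ht _ (Finset.mem_union_left _ (hZ₀ hz')) _
          (Finset.mem_union_right _ (hu₁ i b hb)) hlt).trans (htc _ _)
      · have := dist_triangle_max z' (u i z) (u i b)
        rw [(u i).dist_eq] at this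
        rcases le_max_iff.1 this with h | h
        · exact absurd (h.trans_lt hd') hlt
        · exact h.trans h2
  -- `(a, b) ↦ (v i a, u i b)` permutes a finite set and does not increase `c`, so it preserves `c`
  have hceq : ∀ i, ∀ a ∈ Z₀, ∀ b ∈ Z₁, c (v i a) (u i b) = c a b := by
    intro i a ha b hb
    let e : QS × QS → QS × QS := fun p => (v i p.1, u i p.2)
    have hmaps : Set.MapsTo e (Z₀ ×ˢ Z₁ : Finset _) (Z₀ ×ˢ Z₁ : Finset _) := by
      rintro ⟨x, y⟩ hxy
      simp only [Finset.mem_coe, Finset.mem_product] at hxy ⊢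
      exact ⟨hv₀ i x hxy.1, hu₁ i y hxy.2⟩
    have hinj : Function.Injective e := by
      rintro ⟨x, y⟩ ⟨x', y'⟩ h
      have h' : v i x = v i x' ∧ u i y = u i y' := Prod.mk.inj h
      exact Prod.ext ((v i).injective h'.1) ((u i).injective h'.2)
    have himg : (Z₀ ×ˢ Z₁).image e = Z₀ ×ˢ Z₁ := by
      refine Finset.eq_of_subset_of_card_le (fun p hp => ?_) (Finset.card_image_of_injective _ hinj).ge
      obtain ⟨p', hp', rfl⟩ := Finset.mem_image.1 hp
      exact hmaps hp'
    have hsum : ∑ p ∈ Z₀ ×ˢ Z₁, c (v i p.1) (u i p.2) = ∑ p ∈ Z₀ ×ˢ Z₁, c p.1 p.2 := by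
      conv_rhs => rw [← himg, Finset.sum_image hinj.injOn]
    refine (Finset.sum_eq_sum_iff_of_le (fun p hp => ?_)).1 hsum (a, b)
      (Finset.mk_mem_product ha hb)
    exact hstep i _ (Finset.mem_product.1 hp).1 _ (Finset.mem_product.1 hp).2
  let s : Finset (QS ⊕ QS) := Z₀.disjSum Z₁
  obtain ⟨f, -, hf⟩ := exists_realization s ρ
    (by rintro (a | a) <;> exact dist_self a)
    (by rintro (a | a) (b | b)
        · exact dist_nonneg
        · exact ht0.le.trans (htc _ _)
        · exact ht0.le.trans (htc _ _)
        · exact dist_nonneg)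
    (by rintro (a | a) (b | b)
        · exact dist_comm _ _
        · rfl
        · rfl
        · exact dist_comm _ _)
    (by rintro (a | a) (b | b) (d | d)
        · exact dist_triangle_max a b d
        · exact hc1 a b d
        · exact hc3 a d b
        · exact hc2 a d b
        · exact (hc1 d b a).trans (by rw [max_comm, dist_comm d b])
        · exact hc4 b a d
        · exact (hc2 d a b).trans (by rw [max_comm, dist_comm b a])
        · exact dist_triangle_max a b d)
    (by rintro (a | a) (b | b) h
        · exact dist_mem_QPos h
        · exact hc_rat _ _
        · exact hc_rat _ _
        · exact dist_mem_QPos h)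
  have hl : ∀ a ∈ Z₀, Sum.inl a ∈ s := fun a ha => Finset.inl_mem_disjSum.2 ha
  have hr : ∀ a ∈ Z₁, Sum.inr a ∈ s := fun a ha => Finset.inr_mem_disjSum.2 ha
  -- move the realization so that it is the inclusion on `Z₀`
  obtain ⟨g, -, hg⟩ := exists_extension Set.univ (fun _ _ _ _ _ _ => trivial) Z₀
    (fun a => f (Sum.inl a)) id (fun _ _ => trivial) (fun _ _ => trivial)
    fun a ha b hb => hf _ (hl a ha) _ (hl b hb)
  obtain ⟨h, -, hh⟩ := exists_extension Set.univ (fun _ _ _ _ _ _ => trivial) Z₁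
    id (fun b => g (f (Sum.inr b))) (fun _ _ => trivial) (fun _ _ => trivial)
    fun a ha b hb => by rw [g.dist_eq]; exact (hf _ (hr a ha) _ (hr b hb)).symm
  have hw : ∀ i, ∃ w : QS ≃ᵢ QS, (∀ y ∈ Set.univ, w y ∈ Set.univ) ∧
      ∀ x ∈ s, w (g (f x)) = g (f (Sum.map (v i) (u i) x)) := by
    intro i
    refine exists_extension Set.univ (fun _ _ _ _ _ _ => trivial) s (fun x => g (f x))
      (fun x => g (f (Sum.map (v i) (u i) x))) (fun _ _ => trivial) (fun _ _ => trivial) ?_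
    have hs : ∀ x ∈ s, Sum.map (v i) (u i) x ∈ s := by
      rintro (a | a) ha
      · exact hl _ (hv₀ i a (Finset.inl_mem_disjSum.1 ha))
      · exact hr _ (hu₁ i a (Finset.inr_mem_disjSum.1 ha))
    intro x hx y hy
    rw [g.dist_eq, g.dist_eq, hf x hx y hy, hf _ (hs x hx) _ (hs y hy)]
    rcases x with a | a <;> rcases y with b | b
    · exact ((v i).dist_eq a b).symm
    · exact (hceq i a (Finset.inl_mem_disjSum.1 hx) b (Finset.inr_mem_disjSum.1 hy)).symm
    · exact (hceq i b (Finset.inl_mem_disjSum.1 hy) a (Finset.inr_mem_disjSum.1 hx)).symm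
    · exact ((u i).dist_eq a b).symm
  choose w _ hw using hw
  have hg' : ∀ a ∈ Z₀, g (f (Sum.inl a)) = a := hg
  have hh' : ∀ b ∈ Z₁, h b = g (f (Sum.inr b)) := hh
  refine ⟨h, w, fun z hz => ?_, fun i z hz => ?_, fun i z hz => ?_⟩
  · rw [hh' z (hZ₁ hz)]
    nth_rw 2 [← hg' z (hZ₀ hz)]
    rw [g.dist_eq, hf _ (hr z (hZ₁ hz)) _ (hl z (hZ₀ hz))]
    refine lt_of_le_of_lt (hc_le z z z hz t le_rfl ?_ ?_) htε <;> rw [dist_self] <;> exact ht0.le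
  · have := hw i _ (hl z hz)
    rw [hg' z hz] at this
    rw [this]
    exact hg' _ (hv₀ i z hz)
  · rw [hh' z hz, hw i _ (hr z hz), hh' _ (hu₁ i z hz)]
    rfl

/-! ### Generic tuples of isometries -/

variable {m : ℕ}

/-- `Z` is invariant under the isometries `v i` up to an error less than `ε`. -/
def AlmostInvariant (v : Fin m → QS ≃ᵢ QS) (Z : Finset QS) (ε : ℝ) : Prop :=
  ∀ i, ∀ z ∈ Z, ∃ z' ∈ Z, dist (v i z) z' < ε

/-- All orbits of balls under the group generated by the `v i` are finite: every finite set is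
contained, for each `δ > 0`, in a finite set invariant up to `δ`. -/
def Absorbing (v : Fin m → QS ≃ᵢ QS) : Prop :=
  ∀ (Z₀ : Finset QS) (δ : ℝ), 0 < δ → ∃ Z, Z₀ ⊆ Z ∧ AlmostInvariant v Z δ

/-- Extension property of a tuple `v`: whenever a tuple `u` agrees with `v` up to `ε` on an
`ε`-invariant set `Z`, its action on any larger finite set `Z'` is realised up to `ε'` inside `v`, by
a map `h` that is the identity on `Z` up to `ε`. -/
def Rich (v : Fin m → QS ≃ᵢ QS) : Prop :=
  ∀ (Z Z' : Finset QS) (ε ε' : ℚ), 0 < ε' → ε' ≤ ε → Z.Nonempty → Z ⊆ Z' →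
    ∀ u : Fin m → QS ≃ᵢ QS, AlmostInvariant v Z ε → (∀ i, ∀ z ∈ Z, dist (u i z) (v i z) < ε) →
    ∃ h : QS ≃ᵢ QS, (∀ z ∈ Z, dist (h z) z < ε) ∧
      ∀ i, ∀ z ∈ Z', dist (h (u i z)) (v i (h z)) < ε'

lemma lt_trans_ultra {x y z : QS} {r : ℝ} (h1 : dist x y < r) (h2 : dist y z < r) :
    dist x z < r :=
  (dist_triangle_max x y z).trans_lt (max_lt h1 h2)

lemma continuous_eval (i : Fin m) (x : QS) :
    Continuous fun v : Fin m → QS ≃ᵢ QS => v i x :=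
  (continuous_apply x).comp (continuous_induced_dom.comp (continuous_apply i))

lemma isOpen_eval_lt (i : Fin m) (x y : QS) (ε : ℝ) :
    IsOpen {v : Fin m → QS ≃ᵢ QS | dist (v i x) y < ε} :=
  isOpen_lt ((continuous_eval i x).dist continuous_const) continuous_const

/-- A set of tuples is dense if every tuple can be modified off a finite set to lie in it. -/
lemma dense_of_agree (U : Set (Fin m → QS ≃ᵢ QS))
    (h : ∀ (v₀ : Fin m → QS ≃ᵢ QS) (Z₀ : Finset QS), ∃ v ∈ U, ∀ i, ∀ z ∈ Z₀, v i z = v₀ i z) :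
    Dense U := by
  intro v₀
  choose v hv hagree using h v₀
  refine mem_closure_of_tendsto (f := v) (b := Filter.atTop) ?_ (Filter.Eventually.of_forall hv)
  rw [tendsto_pi_nhds]
  intro i
  rw [nhds_induced, Filter.tendsto_comap_iff, tendsto_pi_nhds]
  intro x
  refine tendsto_const_nhds.congr' ?_
  filter_upwards [Filter.eventually_ge_atTop {x}] with Z hZ
  exact (hagree Z i x (hZ (Finset.mem_singleton_self x))).symm

lemma isOpen_almostInvariant (Z : Finset QS) (ε : ℝ) :
    IsOpen {v : Fin m → QS ≃ᵢ QS | AlmostInvariant v Z ε} := by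
  have : {v : Fin m → QS ≃ᵢ QS | AlmostInvariant v Z ε} =
      ⋂ i, ⋂ z ∈ Z, ⋃ z' ∈ Z, {v | dist (v i z) z' < ε} := by
    ext v; simp [AlmostInvariant]
  rw [this]
  exact isOpen_iInter_of_finite fun i => isOpen_biInter_finset fun z _ =>
    isOpen_biUnion fun z' _ => isOpen_eval_lt i z z' ε

lemma exists_denseSeq_near (x : QS) {δ : ℝ} (hδ : 0 < δ) :
    ∃ j, dist x (TopologicalSpace.denseSeq QS j) < δ := by
  obtain ⟨_, ⟨j, rfl⟩, hj⟩ :=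
    Metric.dense_iff.1 (TopologicalSpace.denseRange_denseSeq QS) x δ hδ |>.imp fun _ h => h.symm
  exact ⟨j, by rw [dist_comm]; exact hj⟩

lemma residual_absorbing : ∀ᶠ v in residual (Fin m → QS ≃ᵢ QS), Absorbing v := by
  classical
  let q := TopologicalSpace.denseSeq QS
  have h1 : ∀ (F : Finset ℕ) (n : ℕ), ∀ᶠ v in residual (Fin m → QS ≃ᵢ QS),
      ∃ Z, F.image q ⊆ Z ∧ AlmostInvariant v Z (1 / ((n : ℝ) + 1)) := by
    intro F n
    refine residual_of_dense_open ?_ ?_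
    · have : {v : Fin m → QS ≃ᵢ QS | ∃ Z, F.image q ⊆ Z ∧ AlmostInvariant v Z (1 / ((n : ℝ) + 1))} =
          ⋃ (Z) (_ : F.image q ⊆ Z), {v | AlmostInvariant v Z (1 / ((n : ℝ) + 1))} := by
        ext v; simp
      rw [this]
      exact isOpen_iUnion fun Z => isOpen_iUnion fun _ => isOpen_almostInvariant _ _
    · refine dense_of_agree _ fun v₀ Z₀ => ?_
      obtain ⟨v, Z, hZ, hv, hinv⟩ := exists_finite_invariant v₀ (Z₀ ∪ F.image q)
      refine ⟨v, ⟨Z, Finset.subset_union_right.trans hZ, fun i z hz => ⟨_, hinv i z hz, ?_⟩⟩,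
        fun i z hz => hv i z (Finset.mem_union_left _ hz)⟩
      rw [dist_self]; positivity
  filter_upwards [eventually_countable_forall.2 fun F => eventually_countable_forall.2 (h1 F)]
    with v hv Z₀ δ hδ
  have hj : ∀ z : QS, ∃ j, dist z (q j) < δ := fun z => exists_denseSeq_near z hδ
  choose j hj using hj
  obtain ⟨n, hn⟩ := exists_nat_one_div_lt hδ
  obtain ⟨Z, hZ, hinv⟩ := hv (Z₀.image j) n
  refine ⟨Z₀ ∪ Z, Finset.subset_union_left, fun i z hz => ?_⟩
  rcases Finset.mem_union.1 hz with hz | hz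
  · obtain ⟨z', hz', hd⟩ := hinv i (q (j z))
      (hZ (Finset.mem_image_of_mem _ (Finset.mem_image_of_mem _ hz)))
    refine ⟨z', Finset.mem_union_right _ hz', lt_trans_ultra ?_ (hd.trans hn)⟩
    rw [(v i).dist_eq]; exact hj z
  · obtain ⟨z', hz', hd⟩ := hinv i z hz
    exact ⟨z', Finset.mem_union_right _ hz', hd.trans hn⟩

lemma residual_rich : ∀ᶠ v in residual (Fin m → QS ≃ᵢ QS), Rich v := by
  classical
  let q := TopologicalSpace.denseSeq QS
  -- countably many instances of the property suffice: points are taken in a countable dense set,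
  -- and `u` is replaced by finitely many approximate values `σ`
  have h1 : ∀ (F F' : Finset ℕ) (ε ε' : ℚ) (σ : Fin m → F' → ℕ), F.Nonempty → 0 < ε →
      ∀ᶠ v in residual (Fin m → QS ≃ᵢ QS),
      (AlmostInvariant v (F.image q) ε ∧ ∃ u : Fin m → QS ≃ᵢ QS,
        (∀ i, ∀ j ∈ F, dist (u i (q j)) (v i (q j)) < ε) ∧
        ∀ i (j : F'), dist (u i (q j)) (q (σ i j)) < ε') →
      ∃ h : QS ≃ᵢ QS, (∀ j ∈ F, dist (h (q j)) (q j) < ε) ∧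
        ∀ i (j : F'), dist (h (q (σ i j))) (v i (h (q j))) < ε' := by
    intro F F' ε ε' σ hF hε
    have hεR : (0 : ℝ) < ε := by exact_mod_cast hε
    refine residual_of_dense_open ?_ ?_
    · rw [isOpen_iff_mem_nhds]
      intro v hv
      by_cases hH : AlmostInvariant v (F.image q) ε ∧ ∃ u : Fin m → QS ≃ᵢ QS,
        (∀ i, ∀ j ∈ F, dist (u i (q j)) (v i (q j)) < ε) ∧
        ∀ i (j : F'), dist (u i (q j)) (q (σ i j)) < ε'
      · obtain ⟨h, hh1, hh2⟩ := hv hH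
        have hopen : ∀ᶠ v' in 𝓝 v, ∀ i (j : F'), dist (v' i (h (q j))) (h (q (σ i j))) < ε' := by
          refine Filter.eventually_all.2 fun i => Filter.eventually_all.2 fun j => ?_
          refine (isOpen_eval_lt i _ _ _).mem_nhds ?_
          have := hh2 i j
          rw [dist_comm] at this
          exact this
        filter_upwards [hopen] with v' hv' _
        exact ⟨h, hh1, fun i j => by rw [dist_comm]; exact hv' i j⟩
      · -- the hypothesis depends only on the values of `v` on `F` up to `ε`
        have hopen : ∀ᶠ v' in 𝓝 v, ∀ i, ∀ j ∈ F, dist (v' i (q j)) (v i (q j)) < ε := by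
          refine Filter.eventually_all.2 fun i => (Filter.eventually_all_finset F).2 fun j _ => ?_
          refine (isOpen_eval_lt i _ _ _).mem_nhds ?_
          change dist (v i (q j)) (v i (q j)) < ε
          rwa [dist_self]
        filter_upwards [hopen] with v' hv'
        rintro ⟨hinv, u, hu1, hu2⟩
        refine absurd ⟨fun i z hz => ?_, u, fun i j hj => ?_, hu2⟩ hH
        · obtain ⟨z', hz', hd⟩ := hinv i z hz
          obtain ⟨j, hj, rfl⟩ := Finset.mem_image.1 hz
          refine ⟨z', hz', lt_trans_ultra ?_ hd⟩
          rw [dist_comm]; exact hv' i j hj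
        · exact lt_trans_ultra (hu1 i j hj) (hv' i j hj)
    · refine dense_of_agree _ fun v₀ Z₀ => ?_
      by_cases hH : AlmostInvariant v₀ (F.image q) ε ∧ ∃ u : Fin m → QS ≃ᵢ QS,
        (∀ i, ∀ j ∈ F, dist (u i (q j)) (v₀ i (q j)) < ε) ∧
        ∀ i (j : F'), dist (u i (q j)) (q (σ i j)) < ε'
      swap
      · exact ⟨v₀, fun h => absurd h hH, fun _ _ _ => rfl⟩
      obtain ⟨hinv, u, hu1, hu2⟩ := hH
      obtain ⟨v₁, Z₁, hZ₁, hv₁, hinv₁⟩ := exists_finite_invariant v₀ (Z₀ ∪ F.image q)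
      obtain ⟨u₂, Z₂, hZ₂, hu₂, hinv₂⟩ := exists_finite_invariant u (F'.image q ∪ F.image q)
      have hvF : ∀ i, ∀ z ∈ F.image q, v₁ i z = v₀ i z :=
        fun i z hz => hv₁ i z (Finset.mem_union_right _ hz)
      have huF : ∀ i, ∀ z ∈ F.image q, u₂ i z = u i z :=
        fun i z hz => hu₂ i z (Finset.mem_union_right _ hz)
      obtain ⟨h, w, hh, hw1, hw2⟩ := exists_amalgam v₁ u₂ (F.image q) Z₁ Z₂ ε hεR
        (hF.image q) (Finset.subset_union_right.trans hZ₁) (Finset.subset_union_right.trans hZ₂)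
        hinv₁ hinv₂ (fun i z hz => by rw [hvF i z hz]; exact hinv i z hz)
        (fun i z hz => by
          rw [hvF i z hz, huF i z hz]
          obtain ⟨j, hj, rfl⟩ := Finset.mem_image.1 hz
          exact hu1 i j hj)
      refine ⟨w, fun _ => ⟨h, fun j hj => hh _ (Finset.mem_image_of_mem _ hj), fun i j => ?_⟩,
        fun i z hz => ?_⟩
      · have hj : q j ∈ F'.image q ∪ F.image q :=
          Finset.mem_union_left _ (Finset.mem_image_of_mem _ j.2)
        rw [← hw2 i _ (hZ₂ hj), hu₂ i _ hj, h.dist_eq, dist_comm]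
        exact hu2 i j
      · rw [hw1 i z (hZ₁ (Finset.mem_union_left _ hz)), hv₁ i z (Finset.mem_union_left _ hz)]
  have h2 : ∀ (F F' : Finset ℕ) (ε ε' : ℚ) (σ : Fin m → F' → ℕ),
      ∀ᶠ v in residual (Fin m → QS ≃ᵢ QS), F.Nonempty → 0 < ε →
      (AlmostInvariant v (F.image q) ε ∧ ∃ u : Fin m → QS ≃ᵢ QS,
        (∀ i, ∀ j ∈ F, dist (u i (q j)) (v i (q j)) < ε) ∧
        ∀ i (j : F'), dist (u i (q j)) (q (σ i j)) < ε') →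
      ∃ h : QS ≃ᵢ QS, (∀ j ∈ F, dist (h (q j)) (q j) < ε) ∧
        ∀ i (j : F'), dist (h (q (σ i j))) (v i (h (q j))) < ε' := by
    intro F F' ε ε' σ
    by_cases hF : F.Nonempty ∧ 0 < ε
    · filter_upwards [h1 F F' ε ε' σ hF.1 hF.2] with v hv _ _ using hv
    · exact Filter.Eventually.of_forall fun v h h' => absurd ⟨h, h'⟩ hF
  filter_upwards [eventually_countable_forall.2 fun F => eventually_countable_forall.2 fun F' =>
    eventually_countable_forall.2 fun ε => eventually_countable_forall.2 fun ε' =>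
    eventually_countable_forall.2 (h2 F F' ε ε')] with v hv Z Z' ε ε' hε' hle hZ hZZ' u hinv hclose
  have hε'R : (0 : ℝ) < ε' := by exact_mod_cast hε'
  have hleR : (ε' : ℝ) ≤ ε := by exact_mod_cast hle
  have hj : ∀ z : QS, ∃ j, dist z (q j) < ε' := fun z => exists_denseSeq_near z hε'R
  choose j hj using hj
  have hjε : ∀ z, dist z (q (j z)) < ε := fun z => (hj z).trans_le hleR
  obtain ⟨h, hh1, hh2⟩ := hv (Z.image j) (Z'.image j) ε ε' (fun i k => j (u i (q k)))
    (hZ.image j) (hε'.trans_le hle) ⟨by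
      intro i y hy
      obtain ⟨k, hk, rfl⟩ := Finset.mem_image.1 hy
      obtain ⟨z, hz, rfl⟩ := Finset.mem_image.1 hk
      obtain ⟨z', hz', hd⟩ := hinv i z hz
      refine ⟨q (j z'), Finset.mem_image_of_mem _ (Finset.mem_image_of_mem _ hz'), ?_⟩
      refine lt_trans_ultra ?_ (lt_trans_ultra hd (hjε z'))
      rw [(v i).dist_eq, dist_comm]; exact hjε z, u, by
      intro i k hk
      obtain ⟨z, hz, rfl⟩ := Finset.mem_image.1 hk
      refine lt_trans_ultra (y := u i z) ?_ (lt_trans_ultra (hclose i z hz) ?_)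
      · rw [(u i).dist_eq, dist_comm]; exact hjε z
      · rw [(v i).dist_eq]; exact hjε z, fun i k => hj _⟩
  refine ⟨h, fun z hz => ?_, fun i z hz => ?_⟩
  · refine lt_trans_ultra (y := h (q (j z))) (by rw [h.dist_eq]; exact hjε z)
      (lt_trans_ultra (hh1 _ (Finset.mem_image_of_mem _ hz)) (by rw [dist_comm]; exact hjε z))
  · have hk := hh2 i ⟨j z, Finset.mem_image_of_mem _ hz⟩
    refine lt_trans_ultra (y := h (u i (q (j z)))) ?_ (lt_trans_ultra ?_ (lt_trans_ultra hk ?_))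
    · rw [h.dist_eq, (u i).dist_eq]; exact hj z
    · rw [h.dist_eq]; exact hj _
    · rw [(v i).dist_eq, h.dist_eq, dist_comm]; exact hj z

/-! ### Back and forth between generic tuples -/

/-- `h` conjugates `v` to `w` up to `ε` on the finite set `Z`, which is `v`-invariant up to `ε`. -/
def AlmostConj (v w : Fin m → QS ≃ᵢ QS) (h : QS ≃ᵢ QS) (Z : Finset QS) (ε : ℝ) : Prop :=
  AlmostInvariant v Z ε ∧ ∀ i, ∀ z ∈ Z, dist (h (v i z)) (w i (h z)) < ε

open Classical in
lemma AlmostConj.symm {v w : Fin m → QS ≃ᵢ QS} {h : QS ≃ᵢ QS} {Z : Finset QS} {ε : ℝ}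
    (H : AlmostConj v w h Z ε) : AlmostConj w v h⁻¹ (Z.image h) ε := by
  refine ⟨fun i y hy => ?_, fun i y hy => ?_⟩
  · obtain ⟨z, hz, rfl⟩ := Finset.mem_image.1 hy
    obtain ⟨z', hz', hd⟩ := H.1 i z hz
    refine ⟨h z', Finset.mem_image_of_mem _ hz', lt_trans_ultra (y := h (v i z)) ?_ ?_⟩
    · rw [dist_comm]; exact H.2 i z hz
    · rwa [h.dist_eq]
  · obtain ⟨z, hz, rfl⟩ := Finset.mem_image.1 hy
    have := H.2 i z hz
    rw [← h⁻¹.dist_eq, IsometryEquiv.inv_apply_self, dist_comm] at this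
    rwa [IsometryEquiv.inv_apply_self]

open Classical in
lemma exists_forth {v w : Fin m → QS ≃ᵢ QS} (hv : Absorbing v) (hw : Rich w) {h : QS ≃ᵢ QS}
    {Z : Finset QS} {ε δ : ℚ} (hδ : 0 < δ) (hle : δ ≤ ε) (hZ : Z.Nonempty)
    (H : AlmostConj v w h Z ε) (Z₀ : Finset QS) :
    ∃ (h' : QS ≃ᵢ QS) (Z' : Finset QS), Z ∪ Z₀ ⊆ Z' ∧ AlmostConj v w h' Z' δ ∧
      ∀ z ∈ Z, dist (h' z) (h z) < ε := by
  obtain ⟨Z', hZ', hinv⟩ := hv (Z ∪ Z₀) δ (by exact_mod_cast hδ)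
  obtain ⟨k, hk1, hk2⟩ := hw (Z.image h) (Z'.image h) ε δ hδ hle (hZ.image h)
    (Finset.image_subset_image (Finset.subset_union_left.trans hZ')) (fun i => h * v i * h⁻¹)
    H.symm.1 (by
      intro i y hy
      obtain ⟨z, hz, rfl⟩ := Finset.mem_image.1 hy
      simp only [IsometryEquiv.mul_apply, IsometryEquiv.inv_apply_self]
      exact H.2 i z hz)
  refine ⟨k * h, Z', hZ', ⟨hinv, fun i z hz => ?_⟩, fun z hz =>
    hk1 _ (Finset.mem_image_of_mem _ hz)⟩
  have := hk2 i _ (Finset.mem_image_of_mem h hz)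
  simpa only [IsometryEquiv.mul_apply, IsometryEquiv.inv_apply_self] using this

open Classical in
lemma exists_back {v w : Fin m → QS ≃ᵢ QS} (hv : Rich v) (hw : Absorbing w) {h : QS ≃ᵢ QS}
    {Z : Finset QS} {ε δ : ℚ} (hδ : 0 < δ) (hle : δ ≤ ε) (hZ : Z.Nonempty)
    (H : AlmostConj v w h Z ε) (Z₀ : Finset QS) :
    ∃ (h' : QS ≃ᵢ QS) (Z' : Finset QS), (∀ z ∈ Z, ∃ z' ∈ Z', dist z z' < ε) ∧
      (∀ z ∈ Z₀, ∃ z' ∈ Z', h' z' = z) ∧ AlmostConj v w h' Z' δ ∧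
      ∀ z ∈ Z, dist (h' z) (h z) < ε := by
  obtain ⟨k, Z', hZ', hk, hkd⟩ := exists_forth hw hv hδ hle (hZ.image h) H.symm Z₀
  have hkz : ∀ z ∈ Z, dist (k (h z)) z < ε := by
    intro z hz
    have := hkd _ (Finset.mem_image_of_mem h hz)
    rwa [IsometryEquiv.inv_apply_self] at this
  refine ⟨k⁻¹, Z'.image k, fun z hz => ?_, fun z hz => ?_, hk.symm, fun z hz => ?_⟩
  · refine ⟨k (h z), Finset.mem_image_of_mem _
      (hZ' (Finset.mem_union_left _ (Finset.mem_image_of_mem _ hz))), ?_⟩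
    rw [dist_comm]; exact hkz z hz
  · exact ⟨k z, Finset.mem_image_of_mem _ (hZ' (Finset.mem_union_right _ hz)),
      IsometryEquiv.inv_apply_self _ _⟩
  · rw [← k.dist_eq, IsometryEquiv.apply_inv_self, dist_comm]
    exact hkz z hz

lemma exists_back_and_forth {v w : Fin m → QS ≃ᵢ QS} (hv : Absorbing v) (hv' : Rich v)
    (hw : Absorbing w) (hw' : Rich w) {h : QS ≃ᵢ QS}
    {Z : Finset QS} {ε δ : ℚ} (hδ : 0 < δ) (hle : δ ≤ ε) (hZ : Z.Nonempty)
    (H : AlmostConj v w h Z ε) (Z₀ : Finset QS) :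
    ∃ (h' : QS ≃ᵢ QS) (Z' : Finset QS), Z'.Nonempty ∧ AlmostConj v w h' Z' δ ∧
      (∀ z ∈ Z, dist (h' z) (h z) < ε) ∧ (∀ z ∈ Z, ∃ z' ∈ Z', dist z z' < δ) ∧
      (∀ z ∈ Z₀, ∃ z' ∈ Z', dist z z' < δ) ∧ ∀ z ∈ Z₀, ∃ z' ∈ Z', h' z' = z := by
  classical
  obtain ⟨h₁, Z₁, hZ₁, H₁, hd₁⟩ := exists_forth hv hw' hδ hle hZ H Z₀
  have hsub : Z ⊆ Z₁ := Finset.subset_union_left.trans hZ₁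
  obtain ⟨h₂, Z₂, hn₂, hr₂, H₂, hd₂⟩ := exists_back hv' hw hδ le_rfl (hZ.mono hsub) H₁ Z₀
  refine ⟨h₂, Z₂, ?_, H₂, fun z hz => ?_, fun z hz => hn₂ z (hsub hz),
    fun z hz => hn₂ z (hZ₁ (Finset.mem_union_right _ hz)), hr₂⟩
  · obtain ⟨z, hz⟩ := hZ
    obtain ⟨z', hz', -⟩ := hn₂ z (hsub hz)
    exact ⟨z', hz'⟩
  · exact lt_trans_ultra ((hd₂ z (hsub hz)).trans_le (by exact_mod_cast hle)) (hd₁ z hz)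

/-- Two tuples which are both absorbing and rich are conjugate. -/
lemma exists_conj {v w : Fin m → QS ≃ᵢ QS} (hv : Absorbing v) (hv' : Rich v)
    (hw : Absorbing w) (hw' : Rich w) : ∃ g : QS ≃ᵢ QS, ∀ i, w i = g * v i * g⁻¹ := by
  classical
  let q := TopologicalSpace.denseSeq QS
  let x₀ : QS := q 0
  -- the initial scale is so large that the identity conjugates `v` to `w` on a single point
  obtain ⟨M, hM0, hM⟩ : ∃ M : ℕ, 0 < M ∧ ∀ i, dist (v i x₀) x₀ < M ∧ dist (w i x₀) x₀ < M := by
    obtain ⟨M, hM⟩ := exists_nat_gt (∑ i, (dist (v i x₀) x₀ + dist (w i x₀) x₀))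
    have hs : ∀ i, dist (v i x₀) x₀ + dist (w i x₀) x₀ ≤
        ∑ i, (dist (v i x₀) x₀ + dist (w i x₀) x₀) := fun i =>
      Finset.single_le_sum (f := fun i => dist (v i x₀) x₀ + dist (w i x₀) x₀)
        (fun _ _ => by positivity) (Finset.mem_univ i)
    refine ⟨M, ?_, fun i => ⟨?_, ?_⟩⟩
    · have : (0 : ℝ) < M := lt_of_le_of_lt (Finset.sum_nonneg fun _ _ => by positivity) hM
      exact_mod_cast this
    · linarith [hs i, dist_nonneg (x := w i x₀) (y := x₀)]
    · linarith [hs i, dist_nonneg (x := v i x₀) (y := x₀)]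
  let ε : ℕ → ℚ := fun k => M / (k + 1)
  have hεpos : ∀ k, 0 < ε k := fun k => by
    have : (0 : ℚ) < M := by exact_mod_cast hM0
    positivity
  have hεanti : Antitone ε := by
    intro a b hab
    have : (a : ℚ) ≤ b := by exact_mod_cast hab
    change (M : ℚ) / (b + 1) ≤ M / (a + 1)
    gcongr
  have hεantiR : ∀ {a b : ℕ}, a ≤ b → (ε b : ℝ) ≤ ε a := fun hab => by
    exact_mod_cast hεanti hab
  have hεlim : ∀ δ : ℝ, 0 < δ → ∀ᶠ k in Filter.atTop, (ε k : ℝ) < δ := by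
    intro δ hδ
    have : Filter.Tendsto (fun k : ℕ => (M : ℝ) / ((k : ℝ) + 1)) Filter.atTop (𝓝 0) :=
      tendsto_const_nhds.div_atTop
        (Filter.tendsto_atTop_add_const_right _ _ tendsto_natCast_atTop_atTop)
    filter_upwards [this.eventually (gt_mem_nhds hδ)] with k hk
    simpa [ε] using hk
  -- the sequence of approximate conjugations
  let St : ℕ → Type := fun k =>
    {p : (QS ≃ᵢ QS) × Finset QS // p.2.Nonempty ∧ AlmostConj v w p.1 p.2 (ε k)}
  let s₀ : St 0 := ⟨(1, {x₀}), Finset.singleton_nonempty _, by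
    have hε0 : ((ε 0 : ℚ) : ℝ) = M := by simp [ε]
    rw [hε0]
    refine ⟨fun i z hz => ⟨x₀, Finset.mem_singleton_self _, ?_⟩, fun i z hz => ?_⟩
    · rw [Finset.mem_singleton.1 hz]; exact (hM i).1
    · rw [Finset.mem_singleton.1 hz]
      exact lt_trans_ultra (hM i).1 (by rw [dist_comm]; exact (hM i).2)⟩
  have hstep : ∀ k (s : St k), ∃ s' : St (k + 1),
      (∀ z ∈ s.1.2, dist (s'.1.1 z) (s.1.1 z) < ε k) ∧
      (∀ z ∈ s.1.2, ∃ z' ∈ s'.1.2, dist z z' < ε (k + 1)) ∧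
      (∀ j ≤ k, ∃ z' ∈ s'.1.2, dist (q j) z' < ε (k + 1)) ∧
      ∀ j ≤ k, ∃ z' ∈ s'.1.2, s'.1.1 z' = q j := by
    intro k s
    obtain ⟨h', Z', hne, H, h1, h2, h3, h4⟩ := exists_back_and_forth hv hv' hw hw'
      (hεpos (k + 1)) (hεanti k.le_succ) s.2.1 s.2.2 ((Finset.range (k + 1)).image q)
    have hmem : ∀ j ≤ k, q j ∈ (Finset.range (k + 1)).image q := fun j hj =>
      Finset.mem_image_of_mem _ (Finset.mem_range.2 (Nat.lt_succ_of_le hj))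
    exact ⟨⟨(h', Z'), hne, H⟩, h1, h2, fun j hj => h3 _ (hmem j hj), fun j hj => h4 _ (hmem j hj)⟩
  choose next hnext using hstep
  let st : ∀ k, St k := fun k => Nat.rec s₀ next k
  let h : ℕ → QS ≃ᵢ QS := fun k => (st k).1.1
  let Z : ℕ → Finset QS := fun k => (st k).1.2
  have hconj : ∀ k, AlmostConj v w (h k) (Z k) (ε k) := fun k => (st k).2.2
  have hA : ∀ k, ∀ z ∈ Z k, dist (h (k + 1) z) (h k z) < ε k := fun k => (hnext k (st k)).1
  have hB : ∀ k, ∀ z ∈ Z k, ∃ z' ∈ Z (k + 1), dist z z' < ε (k + 1) :=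
    fun k => (hnext k (st k)).2.1
  have hC : ∀ k, ∀ j ≤ k, ∃ z' ∈ Z (k + 1), dist (q j) z' < ε (k + 1) :=
    fun k => (hnext k (st k)).2.2.1
  have hE : ∀ k, ∀ j ≤ k, ∃ z' ∈ Z (k + 1), h (k + 1) z' = q j :=
    fun k => (hnext k (st k)).2.2.2
  have hnear : ∀ N, ∀ z ∈ Z N, ∀ k ≥ N, ∃ z' ∈ Z k, dist z z' < ε N := by
    intro N z hz k hk
    induction k, hk using Nat.le_induction with
    | base => exact ⟨z, hz, by rw [dist_self]; exact_mod_cast hεpos N⟩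
    | succ k hk ih =>
      obtain ⟨z', hz', hd⟩ := ih
      obtain ⟨z'', hz'', hd'⟩ := hB k z' hz'
      exact ⟨z'', hz'', lt_trans_ultra hd (hd'.trans_le (hεantiR (Nat.le_succ_of_le hk)))⟩
  have hstab : ∀ N, ∀ z ∈ Z N, ∀ k ≥ N, dist (h k z) (h N z) < ε N := by
    intro N z hz k hk
    induction k, hk using Nat.le_induction with
    | base => rw [dist_self]; exact_mod_cast hεpos N
    | succ k hk ih =>
      obtain ⟨z', hz', hd⟩ := hnear N z hz k hk
      refine lt_trans_ultra (y := h k z) ?_ ih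
      refine lt_trans_ultra (y := h (k + 1) z') (by rwa [IsometryEquiv.dist_eq]) ?_
      refine lt_trans_ultra ((hA k z' hz').trans_le (hεantiR hk)) ?_
      rwa [IsometryEquiv.dist_eq, dist_comm]
  -- every point is eventually near the domains and the ranges of the approximations
  have hdom : ∀ x (δ : ℝ), 0 < δ → ∀ᶠ N in Filter.atTop, (ε N : ℝ) < δ ∧ ∃ z ∈ Z N, dist x z < δ := by
    intro x δ hδ
    obtain ⟨j, hj⟩ := exists_denseSeq_near x hδ
    filter_upwards [hεlim δ hδ, Filter.eventually_ge_atTop (j + 1)] with N hN hjN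
    obtain ⟨k, rfl⟩ := Nat.exists_eq_add_of_le' (Nat.one_le_of_lt hjN)
    obtain ⟨z, hz, hd⟩ := hC k j (by omega)
    exact ⟨hN, z, hz, lt_trans_ultra hj (hd.trans hN)⟩
  have hran : ∀ x (δ : ℝ), 0 < δ →
      ∀ᶠ N in Filter.atTop, (ε N : ℝ) < δ ∧ ∃ z ∈ Z N, dist x (h N z) < δ := by
    intro x δ hδ
    obtain ⟨j, hj⟩ := exists_denseSeq_near x hδ
    filter_upwards [hεlim δ hδ, Filter.eventually_ge_atTop (j + 1)] with N hN hjN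
    obtain ⟨k, rfl⟩ := Nat.exists_eq_add_of_le' (Nat.one_le_of_lt hjN)
    obtain ⟨z, hz, hd⟩ := hE k j (by omega)
    exact ⟨hN, z, hz, by rw [hd]; exact hj⟩
  have hlim : ∀ x, ∃ y, Filter.Tendsto (fun k => h k x) Filter.atTop (𝓝 y) := by
    intro x
    apply cauchySeq_tendsto_of_complete
    rw [Metric.cauchySeq_iff']
    intro δ hδ
    obtain ⟨N, hN, z, hz, hd⟩ := (hdom x δ hδ).exists
    refine ⟨N, fun k hk => ?_⟩
    refine lt_trans_ultra (y := h k z) (by rwa [IsometryEquiv.dist_eq]) ?_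
    refine lt_trans_ultra ((hstab N z hz k hk).trans hN) ?_
    rwa [IsometryEquiv.dist_eq, dist_comm]
  have hlim' : ∀ x, ∃ y, Filter.Tendsto (fun k => (h k)⁻¹ x) Filter.atTop (𝓝 y) := by
    intro x
    apply cauchySeq_tendsto_of_complete
    rw [Metric.cauchySeq_iff']
    intro δ hδ
    obtain ⟨N, hN, z, hz, hd⟩ := (hran x δ hδ).exists
    refine ⟨N, fun k hk => ?_⟩
    refine lt_trans_ultra (y := z) ?_ ?_
    · rw [← (h k).dist_eq, IsometryEquiv.apply_inv_self]
      refine lt_trans_ultra hd ?_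
      rw [dist_comm]; exact (hstab N z hz k hk).trans hN
    · rw [← (h N).dist_eq, IsometryEquiv.apply_inv_self, dist_comm]; exact hd
  choose g hg using hlim
  choose g' hg' using hlim'
  have hiso : Isometry g := by
    refine Isometry.of_dist_eq fun x y => ?_
    refine tendsto_nhds_unique ((hg x).dist (hg y)) ?_
    simp only [IsometryEquiv.dist_eq]
    exact tendsto_const_nhds
  have hgg' : ∀ x, g (g' x) = x := by
    intro x
    have h1 : Filter.Tendsto (fun k => dist (h k (g' x)) x) Filter.atTop (𝓝 (dist (g (g' x)) x)) :=
      (hg (g' x)).dist tendsto_const_nhds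
    have h2 : Filter.Tendsto (fun k => dist (g' x) ((h k)⁻¹ x)) Filter.atTop
        (𝓝 (dist (g' x) (g' x))) := tendsto_const_nhds.dist (hg' x)
    have h3 : (fun k => dist (h k (g' x)) x) = fun k => dist (g' x) ((h k)⁻¹ x) := by
      funext k
      rw [← (h k).dist_eq (g' x), IsometryEquiv.apply_inv_self]
    rw [h3] at h1
    have := tendsto_nhds_unique h1 h2
    rw [dist_self] at this
    exact dist_eq_zero.1 this
  have hequi : ∀ i x, g (v i x) = w i (g x) := by
    intro i x
    refine dist_le_zero.1 (le_of_forall_pos_le_add fun δ hδ => ?_)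
    rw [zero_add]
    refine le_of_tendsto ((hg (v i x)).dist (((w i).continuous.tendsto _).comp (hg x))) ?_
    filter_upwards [hdom x δ hδ] with N hN
    obtain ⟨hN, z, hz, hd⟩ := hN
    refine (lt_trans_ultra (y := h N (v i z)) ?_ (lt_trans_ultra
      (((hconj N).2 i z hz).trans hN) ?_)).le
    · rwa [IsometryEquiv.dist_eq, IsometryEquiv.dist_eq]
    · change dist (w i (h N z)) (w i (h N x)) < δ
      rwa [IsometryEquiv.dist_eq, IsometryEquiv.dist_eq, dist_comm]
  refine ⟨IsometryEquiv.mk' g g' hgg' hiso, fun i => ?_⟩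
  rw [eq_mul_inv_iff_mul_eq]
  ext x
  exact (hequi i x).symm

lemma hasAmpleGenerics : HasAmpleGenerics (QS ≃ᵢ QS) := by
  intro n
  have hres := (residual_absorbing (m := n + 1)).and residual_rich
  by_cases hex : ∃ v : Fin (n + 1) → QS ≃ᵢ QS, Absorbing v ∧ Rich v
  · obtain ⟨v, hv, hv'⟩ := hex
    refine ⟨v, ?_⟩
    filter_upwards [hres] with w hw
    exact exists_conj hv hv' hw.1 hw.2
  · -- if there were no such tuple, the empty set would be comeager and the claim trivial
    refine ⟨1, ?_⟩
    filter_upwards [hres] with w hw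
    exact absurd ⟨w, hw⟩ hex

/-! ### Countable cofinality -/

/-- The stabilizer of the closed ball of radius `r` around `x`. -/
def ballStabilizer (x : QS) (r : ℝ) (hr : 0 ≤ r) : Subgroup (QS ≃ᵢ QS) where
  carrier := {g | dist (g x) x ≤ r}
  one_mem' := by
    change dist x x ≤ r
    rwa [dist_self]
  mul_mem' {a b} ha hb := by
    refine (dist_triangle_max (a (b x)) (a x) x).trans (max_le ?_ ha)
    rw [a.dist_eq]; exact hb
  inv_mem' {a} ha := by
    change dist (a⁻¹ x) x ≤ r
    rw [← a.dist_eq, IsometryEquiv.apply_inv_self, dist_comm]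
    exact ha

lemma exists_isometry_dist (k : ℕ) :
    ∃ g : QS ≃ᵢ QS, dist (g (ofFinsupp 0)) (ofFinsupp 0) = (k : ℝ) + 1 := by
  have hk : (k : ℝ) + 1 ∈ QPos := ⟨(k : ℚ) + 1, by positivity, by push_cast; rfl⟩
  let b : QS := ofFinsupp (Finsupp.single ⟨(k : ℝ) + 1, hk⟩ 1)
  refine ⟨⟨Function.Involutive.toPerm _ (swapFun_swapFun (ofFinsupp 0) b),
    Isometry.of_dist_eq (dist_swapFun _ _)⟩, ?_⟩
  change dist (swapFun (ofFinsupp 0) b (ofFinsupp 0)) (ofFinsupp 0) = _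
  rw [swapFun_left]
  refine dist_eq_of_top_diff b (ofFinsupp 0) ⟨(k : ℝ) + 1, hk⟩ ?_ fun p hp => ?_
  · change Finsupp.single (⟨(k : ℝ) + 1, hk⟩ : QPos) 1 ⟨(k : ℝ) + 1, hk⟩ ≠ 0
    simp
  · exact Finsupp.single_eq_of_ne hp.ne'

lemma countable_cofinality : ∃ H : ℕ → Subgroup (QS ≃ᵢ QS),
    (∀ k, H k < H (k + 1)) ∧ (∀ k, H k ≠ ⊤) ∧ ∀ g : QS ≃ᵢ QS, ∃ k, g ∈ H k := by
  have hlt : ∀ k : ℕ, ballStabilizer (ofFinsupp 0) k k.cast_nonneg <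
      ballStabilizer (ofFinsupp 0) (k + 1 : ℕ) (k + 1).cast_nonneg := by
    intro k
    refine SetLike.lt_iff_le_and_exists.2 ⟨fun g (hg : dist _ _ ≤ _) => ?_, ?_⟩
    · change dist _ _ ≤ _
      exact hg.trans (by push_cast; linarith)
    · obtain ⟨g, hg⟩ := exists_isometry_dist k
      refine ⟨g, ?_, fun (h : dist _ _ ≤ _) => ?_⟩
      · change dist _ _ ≤ _
        rw [hg]; push_cast; rfl
      · rw [hg] at h; linarith
  refine ⟨fun k => ballStabilizer (ofFinsupp 0) k k.cast_nonneg, hlt,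
    fun k => (lt_of_lt_of_le (hlt k) le_top).ne, fun g => ?_⟩
  obtain ⟨k, hk⟩ := exists_nat_ge (dist (g (ofFinsupp 0)) (ofFinsupp 0))
  exact ⟨k, hk⟩

end Concrete

end UltraGen

open UltraGen in
theorem urysohn_rational_ample_generics_and_countable_cofinality
    (D : MetricSpace (UrysohnCarrier QPos))
    (hD : ∀ x y : UrysohnCarrier QPos, x ≠ y → D.dist x y = urysohnDist x y) :
    letI := D
    HasAmpleGenerics (UrysohnCarrier QPos ≃ᵢ UrysohnCarrier QPos) ∧
    ∃ H : ℕ → Subgroup (UrysohnCarrier QPos ≃ᵢ UrysohnCarrier QPos),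
      (∀ k, H k < H (k + 1)) ∧ (∀ k, H k ≠ ⊤) ∧
      ∀ g : UrysohnCarrier QPos ≃ᵢ UrysohnCarrier QPos, ∃ k, g ∈ H k := by
  let _ := D
  have : IsUrysohnMetric := ⟨hD⟩
  exact ⟨hasAmpleGenerics, countable_cofinality⟩
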